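/- For every λ = (λ₊,λ₋) ∈ ℂ² and every 0 ≤ m ≤ p−1, the element D_m := d_{m0}(λ) ⊗ g_λ is a joint eigenvector of the complete set of commuting observables: R_κ(D_m) = q^m·D_m, R₊^p(D_m) = λ₊^p·D_m, R₋^p(D_m) = λ₋^p·D_m, and (R₋∘R₊)(D_m) = λ₊λ₋·D_m (the last operator representing the Casimir element p₊p₋ of U_q(e(1,1))). -/

import Mathlib

open scoped TensorProduct

noncomputable section

/-- `q = exp(2πi/p)`, a primitive `p`-th root of unity. -/
def q (p : ℕ) : ℂ := Complex.exp (2 * Real.pi * Complex.I / p)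

/-- `q^{1/2} = exp(iπ/p)`. -/
def qh (p : ℕ) : ℂ := Complex.exp (Real.pi * Complex.I / p)

/-- The balanced q-number `[k] = (q^k - q^{-k})/(q - q^{-1})`. -/
def qnum (p k : ℕ) : ℂ := (q p ^ k - (q p)⁻¹ ^ k) / (q p - (q p)⁻¹)

/-- The balanced q-factorial `[k]! = [1][2]⋯[k]`, with `[0]! = 1`. -/
def qfact (p k : ℕ) : ℂ := ∏ j ∈ Finset.range k, qnum p (j + 1)

/-- Generators `η₊, η₋, δ` of the coordinate algebra of `E(1,1|p)`. -/
inductive Gen : Type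
  | ep : Gen
  | em : Gen
  | d : Gen

open FreeAlgebra in
/-- The defining relations of `A(E(1,1|p))`: the two-sided ideal generated by
`η₋η₊ − q²η₊η₋`, `η₊δ − q²δη₊`, `η₋δ − q²δη₋`, `δ^p − 1`, `η₊^p`, `η₋^p`. -/
inductive ERel (p : ℕ) : FreeAlgebra ℂ Gen → FreeAlgebra ℂ Gen → Prop
  | commEta : ERel p (ι ℂ Gen.em * ι ℂ Gen.ep) ((q p ^ 2) • (ι ℂ Gen.ep * ι ℂ Gen.em))
  | commEpD : ERel p (ι ℂ Gen.ep * ι ℂ Gen.d) ((q p ^ 2) • (ι ℂ Gen.d * ι ℂ Gen.ep))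
  | commEmD : ERel p (ι ℂ Gen.em * ι ℂ Gen.d) ((q p ^ 2) • (ι ℂ Gen.d * ι ℂ Gen.em))
  | deltaPow : ERel p (ι ℂ Gen.d ^ p) 1
  | epPow : ERel p (ι ℂ Gen.ep ^ p) 0
  | emPow : ERel p (ι ℂ Gen.em ^ p) 0

/-- The coordinate algebra `A = A(E(1,1|p))` of the reduced quantum Poincaré group. -/
abbrev A (p : ℕ) : Type := RingQuot (ERel p)

/-- `η₊ ∈ A`. -/
def ηp (p : ℕ) : A p := RingQuot.mkAlgHom ℂ (ERel p) (FreeAlgebra.ι ℂ Gen.ep)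

/-- `η₋ ∈ A`. -/
def ηm (p : ℕ) : A p := RingQuot.mkAlgHom ℂ (ERel p) (FreeAlgebra.ι ℂ Gen.em)

/-- `δ ∈ A`. -/
def dl (p : ℕ) : A p := RingQuot.mkAlgHom ℂ (ERel p) (FreeAlgebra.ι ℂ Gen.d)

set_option synthInstance.maxHeartbeats 1000000
set_option maxHeartbeats 1000000

/-- The algebra `C^∞(ℝ², ℂ)` of smooth complex-valued functions on `ℝ²`. -/
def Cinf : Subalgebra ℂ ((ℝ × ℝ) → ℂ) where
  carrier := {f | ContDiff ℝ (⊤ : ℕ∞) f}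
  mul_mem' := fun {a b} (ha : ContDiff ℝ (⊤ : ℕ∞) a) (hb : ContDiff ℝ (⊤ : ℕ∞) b) =>
    ha.mul hb
  one_mem' := by
    change ContDiff ℝ (⊤ : ℕ∞) (fun _ => (1 : ℂ))
    exact contDiff_const
  add_mem' := fun {a b} (ha : ContDiff ℝ (⊤ : ℕ∞) a) (hb : ContDiff ℝ (⊤ : ℕ∞) b) =>
    ha.add hb
  zero_mem' := by
    change ContDiff ℝ (⊤ : ℕ∞) (fun _ => (0 : ℂ))
    exact contDiff_const
  algebraMap_mem' c := by
    change ContDiff ℝ (⊤ : ℕ∞) (fun _ => c)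
    exact contDiff_const

/-- `A_C = A ⊗ C^∞(ℝ², ℂ)`, the coordinate algebra of the quantum plane `E_q^{(1,1)}`
(without support restriction). -/
abbrev AC (p : ℕ) : Type := A p ⊗[ℂ] ↥Cinf

/-- The partial derivative `∂₊ = ∂/∂z₊` on `C^∞(ℝ², ℂ)`. -/
def dPlus (f : ↥Cinf) : ↥Cinf :=
  ⟨fun z => fderiv ℝ (f : (ℝ × ℝ) → ℂ) z (1, 0), by
    have hf : ContDiff ℝ (⊤ : ℕ∞) (f : (ℝ × ℝ) → ℂ) := f.2
    exact (hf.fderiv_right (m := (⊤ : ℕ∞)) (by simp)).clm_apply contDiff_const⟩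

/-- The partial derivative `∂₋ = ∂/∂z₋` on `C^∞(ℝ², ℂ)`. -/
def dMinus (f : ↥Cinf) : ↥Cinf :=
  ⟨fun z => fderiv ℝ (f : (ℝ × ℝ) → ℂ) z (0, 1), by
    have hf : ContDiff ℝ (⊤ : ℕ∞) (f : (ℝ × ℝ) → ℂ) := f.2
    exact (hf.fderiv_right (m := (⊤ : ℕ∞)) (by simp)).clm_apply contDiff_const⟩

/-- The smooth function `exp(i(a z₊ + b z₋))` on `ℝ²`. -/
def expAB (a b : ℂ) : ↥Cinf :=
  ⟨fun z => Complex.exp (Complex.I * (a * z.1 + b * z.2)), by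
    have h1 : ContDiff ℝ (⊤ : ℕ∞) (fun z : ℝ × ℝ => (z.1 : ℂ)) :=
      Complex.ofRealCLM.contDiff.comp contDiff_fst
    have h2 : ContDiff ℝ (⊤ : ℕ∞) (fun z : ℝ × ℝ => (z.2 : ℂ)) :=
      Complex.ofRealCLM.contDiff.comp contDiff_snd
    have h3 : ContDiff ℝ (⊤ : ℕ∞)
        (fun z : ℝ × ℝ => Complex.I * (a * (z.1 : ℂ) + b * (z.2 : ℂ))) :=
      contDiff_const.mul ((contDiff_const.mul h1).add (contDiff_const.mul h2))
    exact h3.cexp⟩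
/-- `ξ = q·η₊η₋ ∈ A`. -/
def xi (p : ℕ) : A p := q p • (ηp p * ηm p)

/-- The cut-off Hahn–Exton q-Bessel function
`𝒥_m(λ²ξ) = Σ_{k=0}^{p−1−m} (−1)^k q^{mk} (λ²)^k ([k]![k+m]!)⁻¹ ξ^k`. -/
def Jq (p : ℕ) (l2 : ℂ) (m : ℕ) : A p :=
  ∑ k ∈ Finset.range (p - m),
    ((-1 : ℂ) ^ k * q p ^ (m * k) * l2 ^ k / (qfact p k * qfact p (k + m))) • xi p ^ k

/-- The matrix element `d_{m0}(λ) = 𝒥_{p−m}(λ²ξ)(−iq^{1/2}λ₋η₋)^{p−m}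
+ (−iq^{−1/2}λ₊η₊)^m 𝒥_m(λ²ξ)`. -/
def dm0 (p : ℕ) (lp lm : ℂ) (m : ℕ) : A p :=
  Jq p (lp * lm) (p - m) * ((-Complex.I * qh p * lm) • ηm p) ^ (p - m) +
    ((-Complex.I * (qh p)⁻¹ * lp) • ηp p) ^ m * Jq p (lp * lm) m

open Finset in
/-- The half-sum `γ^m Σ_k (−1)^k l^k ([k]![k+m]!)⁻¹ V_{m+k,k}` making up the matrix elements. -/
def besselSum {E : Type*} [AddCommMonoid E] [Module ℂ E] (p : ℕ) (l γ : ℂ) (V : ℕ → ℕ → E)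
    (m : ℕ) : E :=
  ∑ k ∈ range (p - m),
    (γ ^ m * ((-1 : ℂ) ^ k * l ^ k / (qfact p k * qfact p (k + m)))) • V (m + k) k

lemma qh_pow (p : ℕ) (hp : p ≠ 0) : qh p ^ p = -1 := by
  have h : (p : ℂ) ≠ 0 := by exact_mod_cast hp
  rw [qh, ← Complex.exp_nat_mul, mul_div_cancel₀ _ h, Complex.exp_pi_mul_I]

lemma isPrimitiveRoot_q (p : ℕ) (hp : p ≠ 0) : IsPrimitiveRoot (q p) p :=
  Complex.isPrimitiveRoot_exp p hp

lemma q_ne_zero (p : ℕ) : q p ≠ 0 := Complex.exp_ne_zero _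

lemma qh_ne_zero (p : ℕ) : qh p ≠ 0 := Complex.exp_ne_zero _

lemma q_pow_sub_inv_pow_ne_zero {p k : ℕ} (hp : Odd p) (hk : 0 < k) (hkp : k < p) :
    q p ^ k - (q p)⁻¹ ^ k ≠ 0 := by
  intro h
  have h1 : q p ^ (2 * k) = 1 := by
    rw [inv_pow, sub_eq_zero] at h
    rw [two_mul, pow_add]
    nth_rewrite 1 [h]
    exact inv_mul_cancel₀ (pow_ne_zero _ (q_ne_zero p))
  have h2 := (isPrimitiveRoot_q p (by omega)).dvd_of_pow_eq_one _ h1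
  have h3 : p ∣ k := (Nat.Coprime.dvd_mul_left (Nat.coprime_two_right.mpr hp)).mp h2
  exact absurd (Nat.le_of_dvd hk h3) (by omega)

lemma q_sub_inv_ne_zero {p : ℕ} (hp : Odd p) (hp3 : 3 ≤ p) : q p - (q p)⁻¹ ≠ 0 := by
  simpa using q_pow_sub_inv_pow_ne_zero (k := 1) hp (by omega) (by omega)

lemma qnum_ne_zero {p k : ℕ} (hp : Odd p) (hp3 : 3 ≤ p) (hk : 0 < k) (hkp : k < p) :
    qnum p k ≠ 0 :=
  div_ne_zero (q_pow_sub_inv_pow_ne_zero hp hk hkp) (q_sub_inv_ne_zero hp hp3)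

lemma qfact_succ (p k : ℕ) : qfact p (k + 1) = qfact p k * qnum p (k + 1) :=
  Finset.prod_range_succ _ _

lemma qfact_zero (p : ℕ) : qfact p 0 = 1 := Finset.prod_range_zero _

lemma qfact_ne_zero {p k : ℕ} (hp : Odd p) (hp3 : 3 ≤ p) (hkp : k < p) : qfact p k ≠ 0 :=
  Finset.prod_ne_zero_iff.mpr fun j hj =>
    qnum_ne_zero hp hp3 (by omega) (by have := Finset.mem_range.mp hj; omega)

section Ladder

variable {E : Type*} [AddCommMonoid E] [Module ℂ E] {p : ℕ} (hp : Odd p) (hp3 : 3 ≤ p)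
  {h : ℂ} {V : ℕ → ℕ → E} {P : E →ₗ[ℂ] E}
  (hP : ∀ i j, P (V (i + 1) j) = (Complex.I * h * qnum p (i + 1)) • V i j)

include hp hp3 hP in
lemma map_besselSum_succ (hh : h ≠ 0) (x y : ℂ) {m n : ℕ} (hmn : m + n + 1 = p) :
    P (besselSum p (x * y) (-Complex.I * h⁻¹ * x) V (m + 1)) +
        (x * ((-Complex.I * h⁻¹ * x) ^ m *
          ((-1 : ℂ) ^ n * (x * y) ^ n / (qfact p n * qfact p (p - 1))))) • V (p - 1) n =
      x • besselSum p (x * y) (-Complex.I * h⁻¹ * x) V m := by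
  have hpm : p - m = n + 1 := by omega
  have hpm' : p - (m + 1) = n := by omega
  have hnm : n + m = p - 1 := by omega
  have hmn' : m + n = p - 1 := by omega
  rw [besselSum, besselSum, hpm, hpm', Finset.sum_range_succ, smul_add, smul_smul, hnm, hmn',
    map_sum, Finset.smul_sum]
  congr 1
  refine Finset.sum_congr rfl fun k hk => ?_
  have hk := Finset.mem_range.mp hk
  rw [map_smul, show m + 1 + k = m + k + 1 by ring, hP, smul_smul, smul_smul,
    show k + (m + 1) = k + m + 1 by ring, qfact_succ, show m + k + 1 = k + m + 1 by ring]
  congr 1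
  have h1 := qnum_ne_zero (k := k + m + 1) hp hp3 (by omega) (by omega)
  have h2 := qfact_ne_zero (k := k) hp hp3 (by omega)
  have h3 := qfact_ne_zero (k := k + m) hp hp3 (by omega)
  rw [pow_succ _ m]
  generalize (-Complex.I * h⁻¹ * x) ^ m = w
  field_simp
  ring_nf
  simp only [Complex.I_sq]
  ring

include hp hp3 hP in
lemma map_besselSum_transpose {e : ℂ} (hP0 : ∀ j, P (V 0 j) = e • V (p - 1) j)
    (x y : ℂ) {n : ℕ} (hn : n < p) :
    P (besselSum p (x * y) (-Complex.I * h * y) (fun i j => V j i) n) =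
      x • besselSum p (x * y) (-Complex.I * h * y) (fun i j => V j i) (n + 1) +
        ((-Complex.I * h * y) ^ n / qfact p n * e) • V (p - 1) n := by
  obtain ⟨r, hr⟩ : ∃ r, p - n = r + 1 := ⟨p - n - 1, by omega⟩
  have hr' : p - (n + 1) = r := by omega
  rw [besselSum, besselSum, hr, hr', Finset.sum_range_succ', map_add, map_smul, map_sum,
    Finset.smul_sum]
  congr 1
  · refine Finset.sum_congr rfl fun k hk => ?_
    have hk := Finset.mem_range.mp hk
    rw [map_smul, hP, smul_smul, smul_smul, show n + (k + 1) = n + 1 + k by ring,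
      show k + 1 + n = k + n + 1 by ring, show k + (n + 1) = k + n + 1 by ring, qfact_succ p k]
    congr 1
    have h1 := qnum_ne_zero (k := k + 1) hp hp3 (by omega) (by omega)
    have h2 := qfact_ne_zero (k := k) hp hp3 (by omega)
    have h3 := qfact_ne_zero (k := k + n + 1) hp hp3 (by omega)
    field_simp
    ring
  · simp [hP0, smul_smul, qfact_zero, div_eq_mul_inv]

include hp in
lemma ladder_phase (hh : h ^ p = -1) {m n : ℕ} (hmn : m + n + 1 = p) :
    (-Complex.I * h) ^ n * (h * (-1) ^ ((p + 1) / 2)) = (-Complex.I * h⁻¹) ^ m * (-1) ^ n := by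
  obtain ⟨r, hr⟩ := hp
  have h0 : h ≠ 0 := by
    rintro rfl
    rw [zero_pow (by omega)] at hh
    norm_num at hh
  have hI : (-Complex.I) ^ n * Complex.I ^ n = 1 := by
    rw [← mul_pow]; simp
  have hI' : (-Complex.I) ^ n = (-1) ^ n * Complex.I ^ n := by
    rw [← mul_pow]; simp
  have hmn2 : (-Complex.I) ^ m * (-Complex.I) ^ n = (-1) ^ r := by
    rw [← pow_add, show m + n = 2 * r by omega, pow_mul]; simp
  have hh' : h ^ m * h ^ n * h = -1 := by
    rw [← pow_add, ← pow_succ, hmn, hh]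
  have key : (-Complex.I) ^ m * (-1) ^ n = (-Complex.I) ^ n * (-1) ^ r := by
    rw [← hmn2]
    calc (-Complex.I) ^ m * (-1) ^ n
        = (-Complex.I) ^ m * (-1) ^ n * ((-Complex.I) ^ n * Complex.I ^ n) := by rw [hI, mul_one]
      _ = (-Complex.I) ^ n * ((-Complex.I) ^ m * ((-1) ^ n * Complex.I ^ n)) := by ring
      _ = _ := by rw [← hI']
  rw [show (p + 1) / 2 = r + 1 by omega, mul_pow, mul_pow, mul_right_comm _ (h⁻¹ ^ m), key,
    inv_pow, ← div_eq_mul_inv, eq_div_iff (pow_ne_zero m h0), pow_succ]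
  linear_combination -(-Complex.I) ^ n * (-1) ^ r * hh'

include hp hp3 hP in
lemma map_ladder (hh : h ^ p = -1) (x y : ℂ)
    (hP0 : ∀ j, P (V 0 j) =
      (h * (-1) ^ ((p + 1) / 2) * x ^ p / qfact p (p - 1)) • V (p - 1) j)
    {m n : ℕ} (hmn : m + n + 1 = p) :
    P (besselSum p (x * y) (-Complex.I * h⁻¹ * x) V (m + 1) +
        besselSum p (x * y) (-Complex.I * h * y) (fun i j => V j i) n) =
      x • (besselSum p (x * y) (-Complex.I * h⁻¹ * x) V m +
        besselSum p (x * y) (-Complex.I * h * y) (fun i j => V j i) (n + 1)) := by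
  have h0 : h ≠ 0 := by
    rintro rfl
    rw [zero_pow (by omega)] at hh
    norm_num at hh
  rw [map_add, map_besselSum_transpose hp hp3 hP hP0 x y (by omega)]
  have key : (-Complex.I * h * y) ^ n / qfact p n *
      (h * (-1) ^ ((p + 1) / 2) * x ^ p / qfact p (p - 1)) =
      x * ((-Complex.I * h⁻¹ * x) ^ m *
        ((-1 : ℂ) ^ n * (x * y) ^ n / (qfact p n * qfact p (p - 1)))) := by
    have h1 := ladder_phase hp hh hmn
    have h2 : x ^ p = x * x ^ m * x ^ n := by rw [← hmn]; ring
    rw [mul_pow _ y, mul_pow _ x, mul_pow x y, h2, div_mul_div_comm, mul_div_assoc', mul_div_assoc']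
    congr 1
    linear_combination (y ^ n * x * x ^ m * x ^ n) * h1
  rw [key, smul_add, ← map_besselSum_succ hp hp3 hP h0 x y hmn]
  abel

end Ladder

/-- The Weyl-ordered monomial `u^{ij} a^i b^j`. -/
def weyl {B : Type*} [Semiring B] [Algebra ℂ B] (u : ℂ) (a b : B) (i j : ℕ) : B :=
  u ^ (i * j) • (a ^ i * b ^ j)

section Weyl

variable {B : Type*} [Semiring B] [Algebra ℂ B] {u : ℂ} {a b : B}
  (hba : b * a = u ^ 2 • (a * b))

include hba in
lemma pow_mul_pow_of_qcomm (i j : ℕ) : b ^ j * a ^ i = u ^ (2 * (i * j)) • (a ^ i * b ^ j) := by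
  have h1 (j : ℕ) : b ^ j * a = u ^ (2 * j) • (a * b ^ j) := by
    induction j with
    | zero => simp
    | succ j ih =>
      rw [pow_succ', mul_assoc, ih, mul_smul_comm, ← mul_assoc, hba, smul_mul_assoc, smul_smul,
        mul_assoc, ← pow_add, show 2 * j + 2 = 2 * (j + 1) by ring]
  induction i with
  | zero => simp
  | succ i ih =>
    rw [pow_succ, ← mul_assoc, ih, smul_mul_assoc, mul_assoc, h1, mul_smul_comm, smul_smul,
      ← mul_assoc (a ^ i), ← pow_succ, ← pow_add, show 2 * (i * j) + 2 * j = 2 * ((i + 1) * j) by ring]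

include hba in
lemma weyl_swap (hu : u ≠ 0) (i j : ℕ) : weyl u⁻¹ b a j i = weyl u a b i j := by
  rw [weyl, weyl, pow_mul_pow_of_qcomm hba, smul_smul]
  congr 1
  rw [mul_comm j i, inv_pow, two_mul, pow_add, inv_mul_cancel_left₀ (pow_ne_zero _ hu)]

include hba in
lemma smul_mul_pow_eq_weyl (k : ℕ) : (u • (a * b)) ^ k = weyl u a b k k := by
  induction k with
  | zero => simp [weyl]
  | succ k ih =>
    have h := pow_mul_pow_of_qcomm hba k 1
    rw [pow_one] at h
    have hm : a * (a ^ k * b * b ^ k) = a ^ (k + 1) * b ^ (k + 1) := by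
      simp only [pow_succ', mul_assoc]
    rw [pow_succ', ih, weyl, weyl, smul_mul_smul_comm, mul_assoc, ← mul_assoc b, h, smul_mul_assoc,
      mul_smul_comm, smul_smul, hm]
    congr 1
    ring

variable {p : ℕ} {h c : ℂ} {G : B} {K : B ≃ₐ[ℂ] B} {P : B →ₗ[ℂ] B}
  (hu : u ≠ 0) (hKa : K a = u • a) (hKb : K b = u⁻¹ • b) (hKG : K G = G)

include hKa hu in
lemma symm_pow_of_smul (i : ℕ) : K.symm (a ^ i) = u⁻¹ ^ i • a ^ i := by
  rw [AlgEquiv.symm_apply_eq, map_smul, map_pow, hKa, smul_pow, smul_smul, ← mul_pow,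
    inv_mul_cancel₀ hu, one_pow, one_smul]

include hKa hKb hKG in
lemma map_weyl_mul (i j : ℕ) :
    K (weyl u a b i j * G) = (u ^ i * u⁻¹ ^ j) • (weyl u a b i j * G) := by
  rw [weyl, map_mul, map_smul, map_mul, map_pow, map_pow, hKa, hKb, hKG, smul_pow, smul_pow,
    smul_mul_smul_comm, smul_comm, smul_mul_assoc]

variable (hPX : ∀ X Y, P (X * Y) = P X * K Y + K.symm X * P Y)

include hPX in
lemma skewDerivation_one : P 1 = 0 := by
  have h1 := hPX 1 1
  rw [map_one K, map_one K.symm, mul_one, mul_one, one_mul] at h1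
  calc P 1 = (P 1 + P 1) + (-1 : ℂ) • P 1 := by module
    _ = P 1 + (-1 : ℂ) • P 1 := by rw [← h1]
    _ = 0 := by module

include hPX hu hKa in
lemma skewDerivation_pow (hup : u - u⁻¹ ≠ 0)
    (hN : ∀ k, qnum p k * (u - u⁻¹) = u ^ k - u⁻¹ ^ k)
    (hPa : P a = (Complex.I * h) • (1 : B)) (i : ℕ) :
    P (a ^ (i + 1)) = (Complex.I * h * qnum p (i + 1)) • a ^ i := by
  have hrec (k : ℕ) : qnum p (k + 1) = u ^ k + u⁻¹ * qnum p k := by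
    apply mul_right_cancel₀ hup
    rw [add_mul, mul_assoc, hN, hN]
    ring
  induction i with
  | zero =>
    have h1 : qnum p 1 = 1 := by
      apply mul_right_cancel₀ hup
      rw [hN]
      ring
    simp [h1, hPa]
  | succ i ih =>
    have hs := symm_pow_of_smul hu hKa 1
    simp only [pow_one] at hs
    rw [pow_succ', hPX, ih, hPa, hs, map_pow, hKa, smul_pow, smul_mul_smul_comm,
      smul_mul_smul_comm, one_mul, ← pow_succ', ← add_smul, hrec (i + 1)]
    congr 1
    ring

include hPX in
lemma skewDerivation_pow_eq_zero (hPb : P b = 0) (j : ℕ) : P (b ^ j) = 0 := by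
  induction j with
  | zero => rw [pow_zero]; exact skewDerivation_one hPX
  | succ j ih => rw [pow_succ, hPX, ih, hPb, zero_mul, mul_zero, add_zero]

include hPX hba hu hKb in
lemma skewDerivation_weyl_zero (hp : 0 < p) (hup : u ^ p = 1) (hPb : P b = 0)
    (hPG : P G = c • (a ^ (p - 1) * G)) (j : ℕ) :
    P (weyl u a b 0 j * G) = c • (weyl u a b (p - 1) j * G) := by
  have hs := symm_pow_of_smul (u := u⁻¹) (inv_ne_zero hu) hKb j
  rw [inv_inv] at hs
  rw [weyl, weyl, zero_mul, pow_zero, one_smul, pow_zero, one_mul, hPX,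
    skewDerivation_pow_eq_zero hPX hPb, zero_mul, zero_add, hs, hPG, smul_mul_smul_comm,
    ← mul_assoc, pow_mul_pow_of_qcomm hba, smul_mul_assoc, smul_mul_assoc, smul_smul, smul_smul]
  congr 1
  have h1 : u ^ j * u ^ ((p - 1) * j) = 1 := by
    rw [← pow_add, show j + (p - 1) * j = p * j by
      obtain ⟨r, rfl⟩ : ∃ r, p = r + 1 := ⟨p - 1, by omega⟩
      simp; ring, pow_mul, hup, one_pow]
  rw [two_mul, pow_add]
  linear_combination c * u ^ ((p - 1) * j) * h1

include hPX hba hu hKa hKb hKG in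
lemma skewDerivation_weyl_succ (hp : 0 < p) (hup : u - u⁻¹ ≠ 0)
    (hN : ∀ k, qnum p k * (u - u⁻¹) = u ^ k - u⁻¹ ^ k) (hap : a ^ p = 0)
    (hPa : P a = (Complex.I * h) • (1 : B)) (hPb : P b = 0)
    (hPG : P G = c • (a ^ (p - 1) * G)) (i j : ℕ) :
    P (weyl u a b (i + 1) j * G) =
      (Complex.I * h * qnum p (i + 1)) • (weyl u a b i j * G) := by
  have hs := symm_pow_of_smul (u := u⁻¹) (inv_ne_zero hu) hKb j
  have hz : a ^ (i + 1) * a ^ (p - 1) = 0 := by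
    rw [← pow_add, show i + 1 + (p - 1) = p + i by omega, pow_add, hap, zero_mul]
  have hz' : a ^ (i + 1) * (b ^ j * (a ^ (p - 1) * G)) = 0 := by
    rw [← mul_assoc (b ^ j), pow_mul_pow_of_qcomm hba, smul_mul_assoc, mul_smul_comm, mul_assoc,
      ← mul_assoc (a ^ (i + 1)), hz, zero_mul, smul_zero]
  have hbG : P (b ^ j * G) = (u⁻¹⁻¹ ^ j * c) • (b ^ j * (a ^ (p - 1) * G)) := by
    rw [hPX, skewDerivation_pow_eq_zero hPX hPb, zero_mul, zero_add, hs, hPG, smul_mul_smul_comm]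
  rw [weyl, weyl, smul_mul_assoc, map_smul, mul_assoc, hPX,
    skewDerivation_pow hu hKa hPX hup hN hPa, hbG, symm_pow_of_smul hu hKa, smul_mul_smul_comm,
    hz', smul_zero, add_zero, map_mul, map_pow, hKb, hKG, smul_pow]
  simp only [smul_mul_assoc, mul_smul_comm, smul_smul, mul_assoc]
  congr 1
  rw [show (i + 1) * j = i * j + j by ring, pow_add]
  have h1 : u ^ j * u⁻¹ ^ j = 1 := by rw [← mul_pow, mul_inv_cancel₀ hu, one_pow]
  linear_combination u ^ (i * j) * (Complex.I * h * qnum p (i + 1)) * h1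

end Weyl

lemma expAB_hasFDerivAt (α β : ℂ) (z : ℝ × ℝ) :
    HasFDerivAt (expAB α β : ℝ × ℝ → ℂ)
      ((expAB α β : ℝ × ℝ → ℂ) z •
        (Complex.I • (α • Complex.ofRealCLM.comp (ContinuousLinearMap.fst ℝ ℝ ℝ) +
          β • Complex.ofRealCLM.comp (ContinuousLinearMap.snd ℝ ℝ ℝ)))) z := by
  have h := (Complex.I • (α • Complex.ofRealCLM.comp (ContinuousLinearMap.fst ℝ ℝ ℝ) +
    β • Complex.ofRealCLM.comp (ContinuousLinearMap.snd ℝ ℝ ℝ))).hasFDerivAt (x := z)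
  exact h.cexp

lemma dPlus_expAB (α β : ℂ) : dPlus (expAB α β) = (Complex.I * α) • expAB α β := by
  apply Subtype.ext
  funext z
  change fderiv ℝ (expAB α β : ℝ × ℝ → ℂ) z (1, 0) =
    (Complex.I * α) * (expAB α β : ℝ × ℝ → ℂ) z
  rw [(expAB_hasFDerivAt α β z).fderiv]
  simp
  ring

lemma dMinus_expAB (α β : ℂ) : dMinus (expAB α β) = (Complex.I * β) • expAB α β := by
  apply Subtype.ext
  funext z
  change fderiv ℝ (expAB α β : ℝ × ℝ → ℂ) z (0, 1) =
    (Complex.I * β) * (expAB α β : ℝ × ℝ → ℂ) z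
  rw [(expAB_hasFDerivAt α β z).fderiv]
  simp
  ring

lemma ηm_mul_ηp (p : ℕ) : ηm p * ηp p = q p ^ 2 • (ηp p * ηm p) := by
  simpa only [ηp, ηm, map_mul, map_smul] using RingQuot.mkAlgHom_rel ℂ (ERel.commEta (p := p))

lemma ηp_pow (p : ℕ) : ηp p ^ p = 0 := by
  simpa only [ηp, map_pow, map_zero] using RingQuot.mkAlgHom_rel ℂ (ERel.epPow (p := p))

lemma ηm_pow (p : ℕ) : ηm p ^ p = 0 := by
  simpa only [ηm, map_pow, map_zero] using RingQuot.mkAlgHom_rel ℂ (ERel.emPow (p := p))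

lemma dm0_eq_besselSum (p : ℕ) (x y : ℂ) (m : ℕ) :
    dm0 p x y m =
      besselSum p (x * y) (-Complex.I * (qh p)⁻¹ * x) (weyl (q p) (ηp p) (ηm p)) m +
      besselSum p (x * y) (-Complex.I * qh p * y) (fun i j => weyl (q p) (ηp p) (ηm p) j i)
        (p - m) := by
  rw [dm0, add_comm, Jq, Jq, besselSum, besselSum, smul_pow, smul_pow, Finset.mul_sum,
    Finset.sum_mul]
  congr 1
  all_goals
    refine Finset.sum_congr rfl fun k _ => ?_
    rw [smul_mul_smul_comm, xi, smul_mul_pow_eq_weyl (ηm_mul_ηp p), weyl, weyl]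
  · rw [mul_smul_comm, ← mul_assoc, ← pow_add, smul_smul, smul_smul, add_mul, pow_add]
    congr 1
    ring
  · rw [smul_mul_assoc, mul_assoc (ηp p ^ k), ← pow_add, smul_smul, smul_smul,
      add_comm (p - m) k, mul_add, pow_add (q p), mul_comm k (p - m)]
    congr 1
    ring

lemma map_besselSum {E F : Type*} [AddCommMonoid E] [Module ℂ E] [AddCommMonoid F] [Module ℂ F]
    (L : E →ₗ[ℂ] F) (p : ℕ) (l γ : ℂ) (V : ℕ → ℕ → E) (m : ℕ) :
    L (besselSum p l γ V m) = besselSum p l γ (fun i j => L (V i j)) m := by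
  simp only [besselSum, map_sum, map_smul]

lemma besselSum_eigen {E : Type*} [AddCommMonoid E] [Module ℂ E] (L : E →ₗ[ℂ] E) (p : ℕ)
    (l γ t : ℂ) {V : ℕ → ℕ → E} {m : ℕ} (hV : ∀ k, L (V (m + k) k) = t • V (m + k) k) :
    L (besselSum p l γ V m) = t • besselSum p l γ V m := by
  simp only [besselSum, map_sum, map_smul, hV, Finset.smul_sum, smul_comm t]

lemma pow_apply_of_ladder {E : Type*} [AddCommMonoid E] [Module ℂ E] {P : E →ₗ[ℂ] E} {x : ℂ}
    {D : ℕ → E} {p : ℕ} (hD : ∀ m < p, P (D (m + 1)) = x • D m) {j m : ℕ} (hm : m + j ≤ p) :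
    (P ^ j) (D (m + j)) = x ^ j • D m := by
  induction j with
  | zero => simp
  | succ j ih =>
    rw [pow_succ, Module.End.mul_apply, ← add_assoc, hD _ (by omega), map_smul, ih (by omega),
      smul_smul, pow_succ']

lemma pow_apply_of_cyclic_ladder {E : Type*} [AddCommMonoid E] [Module ℂ E] {P : E →ₗ[ℂ] E}
    {x : ℂ} {D : ℕ → E} {p : ℕ} (hD : ∀ m < p, P (D (m + 1)) = x • D m) (h0 : D p = D 0)
    {m : ℕ} (hm : m ≤ p) : (P ^ p) (D m) = x ^ p • D m := by
  have h1 := pow_apply_of_ladder hD (m := 0) (j := m) (by omega)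
  have h2 := pow_apply_of_ladder hD (m := m) (j := p - m) (by omega)
  rw [zero_add] at h1
  rw [show m + (p - m) = p by omega, h0] at h2
  have h3 : P ^ p = P ^ (p - m) * P ^ m := by rw [← pow_add]; congr 1; omega
  rw [h3, Module.End.mul_apply, h1, map_smul, h2, smul_smul, ← pow_add]
  congr 2
  omega

/-- The matrix elements `D_m = d_{m0}(λ)⊗g_λ` are joint eigenvectors of the complete set
of commuting observables `R_κ`, `R₊^p`, `R₋^p` and the Casimir `R₋∘R₊`. -/
theorem statement13 (p : ℕ) (hp : Odd p) (hp3 : 3 ≤ p)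
    (RK : AC p ≃ₐ[ℂ] AC p)
    (hK1 : RK (ηp p ⊗ₜ[ℂ] (1 : ↥Cinf)) = q p • (ηp p ⊗ₜ[ℂ] (1 : ↥Cinf)))
    (hK2 : RK (ηm p ⊗ₜ[ℂ] (1 : ↥Cinf)) = (q p)⁻¹ • (ηm p ⊗ₜ[ℂ] (1 : ↥Cinf)))
    (hK3 : RK (dl p ⊗ₜ[ℂ] (1 : ↥Cinf)) = q p • (dl p ⊗ₜ[ℂ] (1 : ↥Cinf)))
    (hK4 : ∀ f : ↥Cinf, RK ((1 : A p) ⊗ₜ[ℂ] f) = (1 : A p) ⊗ₜ[ℂ] f)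
    (Rp Rm : AC p →ₗ[ℂ] AC p)
    (hp1 : Rp (ηp p ⊗ₜ[ℂ] (1 : ↥Cinf)) = (Complex.I * qh p) • (1 : AC p))
    (hp2 : Rp (ηm p ⊗ₜ[ℂ] (1 : ↥Cinf)) = 0)
    (hp3' : Rp (dl p ⊗ₜ[ℂ] (1 : ↥Cinf)) = 0)
    (hp4 : ∀ f : ↥Cinf, Rp ((1 : A p) ⊗ₜ[ℂ] f) =
      (Complex.I * qh p * ((-1 : ℂ) ^ ((p + 1) / 2) / qfact p (p - 1))) •
        ((ηp p ^ (p - 1)) ⊗ₜ[ℂ] dPlus f))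
    (hp5 : ∀ X Y : AC p, Rp (X * Y) = Rp X * RK Y + RK.symm X * Rp Y)
    (hm1 : Rm (ηm p ⊗ₜ[ℂ] (1 : ↥Cinf)) = (Complex.I * (qh p)⁻¹) • (1 : AC p))
    (hm2 : Rm (ηp p ⊗ₜ[ℂ] (1 : ↥Cinf)) = 0)
    (hm3 : Rm (dl p ⊗ₜ[ℂ] (1 : ↥Cinf)) = 0)
    (hm4 : ∀ f : ↥Cinf, Rm ((1 : A p) ⊗ₜ[ℂ] f) =
      (Complex.I * (qh p)⁻¹ * ((-1 : ℂ) ^ ((p + 1) / 2) / qfact p (p - 1))) •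
        ((ηm p ^ (p - 1)) ⊗ₜ[ℂ] dMinus f))
    (hm5 : ∀ X Y : AC p, Rm (X * Y) = Rm X * RK Y + RK.symm X * Rm Y)
    (lp lm : ℂ) :
    ∀ m : ℕ, m ≤ p - 1 →
      RK (dm0 p lp lm m ⊗ₜ[ℂ] expAB (-(lp ^ p)) (-(lm ^ p))) =
        q p ^ m • (dm0 p lp lm m ⊗ₜ[ℂ] expAB (-(lp ^ p)) (-(lm ^ p))) ∧
      (Rp ^ p) (dm0 p lp lm m ⊗ₜ[ℂ] expAB (-(lp ^ p)) (-(lm ^ p))) =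
        lp ^ p • (dm0 p lp lm m ⊗ₜ[ℂ] expAB (-(lp ^ p)) (-(lm ^ p))) ∧
      (Rm ^ p) (dm0 p lp lm m ⊗ₜ[ℂ] expAB (-(lp ^ p)) (-(lm ^ p))) =
        lm ^ p • (dm0 p lp lm m ⊗ₜ[ℂ] expAB (-(lp ^ p)) (-(lm ^ p))) ∧
      Rm (Rp (dm0 p lp lm m ⊗ₜ[ℂ] expAB (-(lp ^ p)) (-(lm ^ p)))) =
        (lp * lm) • (dm0 p lp lm m ⊗ₜ[ℂ] expAB (-(lp ^ p)) (-(lm ^ p))) := by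
  set g := expAB (-(lp ^ p)) (-(lm ^ p)) with hg
  set a : AC p := ηp p ⊗ₜ[ℂ] (1 : ↥Cinf) with ha
  set b : AC p := ηm p ⊗ₜ[ℂ] (1 : ↥Cinf) with hb
  set G : AC p := (1 : A p) ⊗ₜ[ℂ] g with hG
  let L : A p →ₗ[ℂ] AC p := (TensorProduct.mk ℂ (A p) ↥Cinf).flip g
  let V : ℕ → ℕ → AC p := fun i j => weyl (q p) a b i j * G
  have hL (i j : ℕ) : L (weyl (q p) (ηp p) (ηm p) i j) = V i j := by
    simp [L, V, weyl, ha, hb, hG, Algebra.TensorProduct.tmul_pow,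
      Algebra.TensorProduct.tmul_mul_tmul, TensorProduct.smul_tmul']
  let D : ℕ → AC p := fun m =>
    besselSum p (lp * lm) (-Complex.I * (qh p)⁻¹ * lp) V m +
      besselSum p (lp * lm) (-Complex.I * qh p * lm) (fun i j => V j i) (p - m)
  have hD (m : ℕ) : dm0 p lp lm m ⊗ₜ[ℂ] g = D m := by
    change L (dm0 p lp lm m) = D m
    rw [dm0_eq_besselSum, map_add, map_besselSum, map_besselSum]
    simp only [hL, D]
  have hq0 := q_ne_zero p
  have hqp : q p ^ p = 1 := (isPrimitiveRoot_q p (by omega)).pow_eq_one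
  have hq1 := q_sub_inv_ne_zero hp hp3
  have hN (k : ℕ) : qnum p k * (q p - (q p)⁻¹) = q p ^ k - (q p)⁻¹ ^ k :=
    div_mul_cancel₀ _ hq1
  have hba : b * a = q p ^ 2 • (a * b) := by
    rw [ha, hb, Algebra.TensorProduct.tmul_mul_tmul, Algebra.TensorProduct.tmul_mul_tmul,
      ηm_mul_ηp, TensorProduct.smul_tmul']
  have hab : a * b = (q p)⁻¹ ^ 2 • (b * a) := by
    rw [hba, smul_smul, ← mul_pow, inv_mul_cancel₀ hq0, one_pow, one_smul]
  have hap : a ^ p = 0 := by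
    rw [ha, Algebra.TensorProduct.tmul_pow, ηp_pow, TensorProduct.zero_tmul]
  have hbp : b ^ p = 0 := by
    rw [hb, Algebra.TensorProduct.tmul_pow, ηm_pow, TensorProduct.zero_tmul]
  have hKG : RK G = G := hK4 g
  have hK1' : RK a = (q p)⁻¹⁻¹ • a := by rw [inv_inv]; exact hK1
  have hPG : Rp G = (qh p * (-1) ^ ((p + 1) / 2) * lp ^ p / qfact p (p - 1)) •
      (a ^ (p - 1) * G) := by
    rw [hG, hp4, hg, dPlus_expAB, TensorProduct.tmul_smul, smul_smul, ha,
      Algebra.TensorProduct.tmul_pow, Algebra.TensorProduct.tmul_mul_tmul, one_pow, one_mul, mul_one]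
    congr 1
    linear_combination (-qh p * (-1) ^ ((p + 1) / 2) * lp ^ p / qfact p (p - 1)) * Complex.I_sq
  have hMG : Rm G = ((qh p)⁻¹ * (-1) ^ ((p + 1) / 2) * lm ^ p / qfact p (p - 1)) •
      (b ^ (p - 1) * G) := by
    rw [hG, hm4, hg, dMinus_expAB, TensorProduct.tmul_smul, smul_smul, hb,
      Algebra.TensorProduct.tmul_pow, Algebra.TensorProduct.tmul_mul_tmul, one_pow, one_mul, mul_one]
    congr 1
    linear_combination (-(qh p)⁻¹ * (-1) ^ ((p + 1) / 2) * lm ^ p / qfact p (p - 1)) * Complex.I_sq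
  have hRp (m : ℕ) (hm : m < p) : Rp (D (m + 1)) = lp • D m := by
    have h := map_ladder (V := V) (P := Rp) hp hp3
      (skewDerivation_weyl_succ hba hq0 hK1 hK2 hKG hp5 (by omega) hq1 hN hap hp1 hp2 hPG)
      (qh_pow p (by omega)) lp lm
      (skewDerivation_weyl_zero hba hq0 hK2 hp5 (by omega) hqp hp2 hPG)
      (m := m) (n := p - (m + 1)) (by omega)
    rwa [show p - (m + 1) + 1 = p - m by omega] at h
  have hsw (i j : ℕ) : weyl (q p)⁻¹ b a i j * G = V j i := by
    rw [weyl_swap hba hq0]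
  have hq1' : (q p)⁻¹ - (q p)⁻¹⁻¹ ≠ 0 := by
    rw [inv_inv, ← neg_sub]; exact neg_ne_zero.mpr hq1
  have hN' (k : ℕ) : qnum p k * ((q p)⁻¹ - (q p)⁻¹⁻¹) = (q p)⁻¹ ^ k - (q p)⁻¹⁻¹ ^ k := by
    rw [inv_inv]
    linear_combination -hN k
  have hRm (m : ℕ) (hm : m < p) : Rm (D m) = lm • D (m + 1) := by
    have h1 := skewDerivation_weyl_succ hab (inv_ne_zero hq0) hK2 hK1' hKG hm5 (by omega) hq1' hN'
      hbp hm1 hm2 hMG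
    have h2 := skewDerivation_weyl_zero hab (inv_ne_zero hq0) hK1' hm5 (by omega)
      (by rw [inv_pow, hqp, inv_one]) hm2 hMG
    simp only [hsw] at h1 h2
    have h := map_ladder (V := fun i j => V j i) (P := Rm) hp hp3 h1
      (by rw [inv_pow, qh_pow p (by omega)]; norm_num) lm lp h2
      (m := p - (m + 1)) (n := m) (by omega)
    rw [show p - (m + 1) + 1 = p - m by omega, inv_inv, mul_comm lm lp, add_comm,
      add_comm (besselSum p _ _ (fun i j => V j i) (p - (m + 1)))] at h
    exact h
  have hD0 : D p = D 0 := by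
    simp [D, besselSum]
  intro m hm
  rw [hD]
  refine ⟨?_, pow_apply_of_cyclic_ladder hRp hD0 (by omega), ?_, ?_⟩
  · have hu (k : ℕ) : q p ^ k * (q p)⁻¹ ^ k = 1 := by
      rw [← mul_pow, mul_inv_cancel₀ hq0, one_pow]
    have hinv : (q p)⁻¹ ^ (p - m) = q p ^ m := by
      rw [inv_pow]
      apply inv_eq_of_mul_eq_one_left
      rw [← pow_add, Nat.add_sub_cancel' (by omega), hqp]
    change RK.toLinearMap _ = _
    rw [map_add, besselSum_eigen RK.toLinearMap (t := q p ^ m),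
      besselSum_eigen RK.toLinearMap (t := q p ^ m), smul_add]
    all_goals
      intro k
      refine (map_weyl_mul hK1 hK2 hKG _ _).trans ?_
      congr 1
    · rw [pow_add, hinv]
      linear_combination q p ^ m * hu k
    · rw [pow_add]
      linear_combination q p ^ m * hu k
  · have h := pow_apply_of_cyclic_ladder (P := Rm) (x := lm) (D := fun m => D (p - m)) (p := p)
      (fun k hk => by
        rw [hRm _ (by omega), show p - (k + 1) + 1 = p - k by omega])
      (by simpa using hD0.symm) (m := p - m) (by omega)
    rwa [show p - (p - m) = m by omega] at h
  · obtain _ | k := m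
    · have h1 := hRp (p - 1) (by omega)
      have h2 := hRm (p - 1) (by omega)
      rw [Nat.sub_add_cancel (by omega)] at h1 h2
      rw [← hD0, h1, map_smul, h2, smul_smul]
    · rw [hRp _ (by omega), map_smul, hRm _ (by omega), smul_smul]
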